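/- Let l ≥ 2 and m ≥ 1 be fixed integers and let ε > 0. There exists a constant C > 0 such that for every integer k > l, the number of tuples a ∈ A_{k,l,m} whose associated polynomial p_a has more than one integer root r in the interval m ≤ r < k + m is at most C·k^{l−2+ε}. -/

import Mathlib

noncomputable section

/-- The falling factorial `(x)_j = x (x-1) ⋯ (x-j+1)`, with `(x)_0 = 1`. -/
def fall (x : ℤ) (j : ℕ) : ℤ := ∏ i ∈ Finset.range j, (x - (i : ℤ))

/-- `a ∈ A_{k,l,m}`: an `(l+1)`-tuple of nonnegative integers with
`∑_{j=0}^{l} (j+m) a_j = k + m`. -/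
def memA (k l m : ℕ) (a : Fin (l + 1) → ℕ) : Prop :=
  ∑ j : Fin (l + 1), ((j : ℕ) + m) * a j = k + m

/-- The polynomial
`p_a(x) = (x-m)_k - (-1)^k (k+m-1)_{k-l} ∑_{j=0}^{l} (-1)^j a_j (l+m-1)_{l-j} (x-m)_j`
associated to `a ∈ A_{k,l,m}`. -/
def pA (k l m : ℕ) (a : Fin (l + 1) → ℕ) (x : ℤ) : ℤ :=
  fall (x - (m : ℤ)) k -
    (-1 : ℤ) ^ k * fall ((k : ℤ) + (m : ℤ) - 1) (k - l) *
      ∑ j : Fin (l + 1), (-1 : ℤ) ^ (j : ℕ) * (a j : ℤ) * fall ((l : ℤ) + (m : ℤ) - 1) (l - (j : ℕ))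
        * fall (x - (m : ℤ)) (j : ℕ)

theorem divisor_bound (δ : ℝ) (hδ : 0 < δ) :
    ∃ C : ℝ, 0 < C ∧ ∀ n : ℕ, n ≠ 0 → (n.divisors.card : ℝ) ≤ C * (n : ℝ) ^ δ := by
  obtain ⟨B, hB⟩ := exists_nat_ge ((2 : ℝ) ^ (1 / δ))
  have hlog : 0 < Real.log 2 := Real.log_pos (by norm_num)
  set K : ℝ := 1 + 1 / (δ * Real.log 2) with hK
  have hK1 : 1 ≤ K := by
    have : 0 < 1 / (δ * Real.log 2) := by positivity
    linarith
  refine ⟨K ^ B, by positivity, fun n hn => ?_⟩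
  have key : ∀ p ∈ n.primeFactors, ((n.factorization p + 1 : ℕ) : ℝ) ≤
      (if p < B then K else 1) * ((p : ℝ) ^ (n.factorization p)) ^ δ := by
    intro p hp
    have hp2 : (2 : ℝ) ≤ p := by exact_mod_cast (Nat.prime_of_mem_primeFactors hp).two_le
    generalize n.factorization p = e
    have hrw : ((p : ℝ) ^ e) ^ δ = ((p : ℝ) ^ δ) ^ e := by
      rw [← Real.rpow_natCast, ← Real.rpow_natCast, ← Real.rpow_mul (by positivity),
        ← Real.rpow_mul (by positivity), mul_comm]
    rw [hrw]
    split_ifs with h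
    · have h1 : 1 + δ * Real.log 2 ≤ (p : ℝ) ^ δ := by
        calc 1 + δ * Real.log 2 ≤ Real.exp (δ * Real.log 2) := by
              linarith [Real.add_one_le_exp (δ * Real.log 2)]
          _ = (2 : ℝ) ^ δ := by rw [Real.rpow_def_of_pos (by norm_num), mul_comm]
          _ ≤ _ := Real.rpow_le_rpow (by norm_num) hp2 hδ.le
      have h2 : 1 + (e : ℝ) * (δ * Real.log 2) ≤ ((p : ℝ) ^ δ) ^ e := by
        refine le_trans (one_add_mul_le_pow ?_ e) (pow_le_pow_left₀ (by positivity) h1 e)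
        have : 0 < δ * Real.log 2 := by positivity
        linarith
      calc ((e + 1 : ℕ) : ℝ) ≤ K * (1 + (e : ℝ) * (δ * Real.log 2)) := by
            have hx : 0 < δ * Real.log 2 := by positivity
            have : K * (1 + (e : ℝ) * (δ * Real.log 2)) =
              1 + e + (1 / (δ * Real.log 2) + e * (δ * Real.log 2)) := by
              rw [hK]; field_simp; ring
            rw [this]; push_cast
            have : 0 ≤ 1 / (δ * Real.log 2) + e * (δ * Real.log 2) := by positivity
            linarith
        _ ≤ _ := by gcongr
    · have h1 : (2 : ℝ) ≤ (p : ℝ) ^ δ := by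
        have hpB : (2 : ℝ) ^ (1 / δ) ≤ p := hB.trans (by exact_mod_cast not_lt.mp h)
        calc (2 : ℝ) = ((2 : ℝ) ^ (1 / δ)) ^ δ := by
              rw [← Real.rpow_mul (by norm_num), one_div_mul_cancel hδ.ne', Real.rpow_one]
          _ ≤ _ := Real.rpow_le_rpow (by positivity) hpB hδ.le
      rw [one_mul]
      calc ((e + 1 : ℕ) : ℝ) ≤ ((2 ^ e : ℕ) : ℝ) := by
            exact_mod_cast Nat.lt_two_pow_self
        _ = (2 : ℝ) ^ e := by push_cast; rfl
        _ ≤ _ := pow_le_pow_left₀ (by norm_num) h1 e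
  rw [Nat.card_divisors hn, Nat.cast_prod]
  refine (Finset.prod_le_prod (fun _ _ => by positivity) key).trans ?_
  rw [Finset.prod_mul_distrib]
  have e1 : ∏ p ∈ n.primeFactors, ((p : ℝ) ^ (n.factorization p)) ^ δ = (n : ℝ) ^ δ := by
    rw [Real.finsetProd_rpow _ _ (fun _ _ => by positivity)]
    congr 1
    conv_rhs => rw [← Nat.prod_factorization_pow_eq_self hn]
    rw [Finsupp.prod, Nat.support_factorization]
    push_cast; rfl
  rw [e1]
  gcongr
  rw [Finset.prod_ite, Finset.prod_const, Finset.prod_const_one, mul_one]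
  refine pow_le_pow_right₀ hK1 ?_
  calc _ ≤ (Finset.range B).card := Finset.card_le_card (fun p hp => by
        simp only [Finset.mem_filter] at hp; simpa using hp.2)
    _ = B := by simp

theorem fall_succ (x : ℤ) (j : ℕ) : fall x (j + 1) = fall x j * (x - j) := by
  simp [fall, Finset.prod_range_succ]

theorem fall_pos (x : ℤ) (j : ℕ) (h : (j : ℤ) ≤ x) : 0 < fall x j := by
  refine Finset.prod_pos fun i hi => ?_
  have := Finset.mem_range.mp hi
  omega

theorem fall_zero_of (x : ℤ) (j : ℕ) (h0 : 0 ≤ x) (h : x < j) : fall x j = 0 := by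
  refine Finset.prod_eq_zero (i := x.toNat) (Finset.mem_range.mpr (by omega)) (by omega)

theorem fall_modEq (s t : ℤ) (j : ℕ) : fall s j ≡ fall t j [ZMOD (s - t)] := by
  induction j with
  | zero => simp [fall]
  | succ j ih =>
    rw [fall_succ, fall_succ]
    refine ih.mul (Int.ModEq.sub ?_ rfl)
    exact (Int.modEq_iff_dvd.mpr ((⟨-1, by ring⟩ : s - t ∣ t - s)))

/-- The reduced polynomial. -/
def redP (l m : ℕ) (c : Fin (l + 1) → ℤ) (x : ℤ) : ℤ :=
  ∑ j : Fin (l + 1), (-1 : ℤ) ^ (j : ℕ) * c j * fall ((l : ℤ) + (m : ℤ) - 1) (l - (j : ℕ))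
        * fall x (j : ℕ)

theorem coef_eq (l m : ℕ) (hl : 1 ≤ l) (hm : 1 ≤ m) (j : ℕ) (hj : j ≤ l) :
    (-1 : ℤ) ^ j * fall ((l : ℤ) + m - 1) (l - j) * fall (-(m + 1 : ℤ)) j =
      (j + m) * fall ((l : ℤ) + m - 1) (l - 1) := by
  induction j with
  | zero =>
    obtain ⟨n, rfl⟩ : ∃ n, l = n + 1 := ⟨l - 1, by omega⟩
    simp only [Nat.sub_zero, Nat.add_sub_cancel, fall_succ]
    simp [fall]
    ring
  | succ j ih =>
    have ih := ih (by omega)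
    obtain ⟨t, rfl⟩ : ∃ t, l = t + j + 1 := ⟨l - j - 1, by omega⟩
    have e1 : t + j + 1 - j = t + 1 := by omega
    have e2 : t + j + 1 - (j + 1) = t := by omega
    rw [e1] at ih
    rw [e2, fall_succ _ j]
    rw [fall_succ _ t] at ih
    have hne : ((j : ℤ) + m) ≠ 0 := by omega
    apply mul_left_cancel₀ hne
    push_cast at ih ⊢
    linear_combination ((j : ℤ) + m + 1) * ih

theorem redP_special (l m : ℕ) (hl : 1 ≤ l) (hm : 1 ≤ m) (c : Fin (l + 1) → ℤ) :
    redP l m c (-(m + 1 : ℤ)) =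
      fall ((l : ℤ) + m - 1) (l - 1) * ∑ j : Fin (l + 1), ((j : ℕ) + m : ℤ) * c j := by
  rw [redP, Finset.mul_sum]
  refine Finset.sum_congr rfl fun j _ => ?_
  have := coef_eq l m hl hm j (by omega)
  linear_combination c j * this

theorem redP_modEq (l m : ℕ) (c : Fin (l + 1) → ℤ) (s t : ℤ) :
    redP l m c s ≡ redP l m c t [ZMOD (s - t)] := by
  unfold redP
  exact Int.ModEq.sum fun j _ => (fall_modEq s t j).mul_left _

theorem redP_sub (l m : ℕ) (c d : Fin (l + 1) → ℤ) (s : ℤ) :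
    redP l m (fun j => c j - d j) s = redP l m c s - redP l m d s := by
  simp only [redP, ← Finset.sum_sub_distrib]
  exact Finset.sum_congr rfl fun j _ => by ring

theorem quad_zero (A B C x y z : ℤ) (hxy : x ≠ y) (hxz : x ≠ z) (hyz : y ≠ z)
    (hx : A + B * x + C * (x * (x - 1)) = 0) (hy : A + B * y + C * (y * (y - 1)) = 0)
    (hz : A + B * z + C * (z * (z - 1)) = 0) : A = 0 ∧ B = 0 ∧ C = 0 := by
  have h1 : B + C * (x + y - 1) = 0 := by
    apply mul_left_cancel₀ (sub_ne_zero.mpr hxy); linear_combination hx - hy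
  have h2 : B + C * (x + z - 1) = 0 := by
    apply mul_left_cancel₀ (sub_ne_zero.mpr hxz); linear_combination hx - hz
  have h3 : C = 0 := by
    apply mul_left_cancel₀ (sub_ne_zero.mpr hyz); linear_combination h1 - h2
  subst h3
  have h4 : B = 0 := by linarith
  subst h4
  exact ⟨by linarith, rfl, rfl⟩

theorem redP_inj (n m : ℕ) (hm : 1 ≤ m) (c : Fin (n + 2 + 1) → ℤ)
    (hc : ∀ i : Fin n, c i.succ.succ.succ = 0) (x y z : ℤ)
    (hxy : x ≠ y) (hxz : x ≠ z) (hyz : y ≠ z)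
    (hx : redP (n + 2) m c x = 0) (hy : redP (n + 2) m c y = 0)
    (hz : redP (n + 2) m c z = 0) : ∀ j, c j = 0 := by
  have pos : ∀ j : ℕ, fall (((n + 2 : ℕ) : ℤ) + m - 1) (n + 2 - j) ≠ 0 :=
    fun j => (fall_pos _ _ (by omega)).ne'
  have f0 : ∀ w, fall w 0 = 1 := fun w => by simp [fall]
  have f1 : ∀ w, fall w 1 = w := fun w => by simp [fall]
  have f2 : ∀ w, fall w 2 = w * (w - 1) := fun w => by simp [fall, Finset.prod_range_succ]
  have ex : ∀ w, redP (n + 2) m c w =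
      c 0 * fall (((n + 2 : ℕ) : ℤ) + m - 1) (n + 2 - 0) +
      (- c 1 * fall (((n + 2 : ℕ) : ℤ) + m - 1) (n + 2 - 1)) * w +
      (c 2 * fall (((n + 2 : ℕ) : ℤ) + m - 1) (n + 2 - 2)) * (w * (w - 1)) := by
    intro w
    have v1 : ((Fin.succ 0 : Fin (n + 2 + 1)) : ℕ) = 1 := rfl
    have v2 : ((Fin.succ (Fin.succ 0) : Fin (n + 2 + 1)) : ℕ) = 2 := rfl
    have w1 : (Fin.succ 0 : Fin (n + 2 + 1)) = 1 := rfl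
    have w2 : (Fin.succ (Fin.succ 0) : Fin (n + 2 + 1)) = 2 := rfl
    rw [redP, Fin.sum_univ_succ, Fin.sum_univ_succ, Fin.sum_univ_succ]
    simp only [hc, v1, v2, Fin.val_zero, f0, f1, f2, mul_zero, zero_mul, Finset.sum_const_zero]
    rw [w1, w2]
    ring
  rw [ex] at hx hy hz
  obtain ⟨h0, h1, h2⟩ := quad_zero _ _ _ x y z hxy hxz hyz hx hy hz
  have h0 := (mul_eq_zero.mp h0).resolve_right (pos 0)
  have h1 := (mul_eq_zero.mp h1).resolve_right (pos 1)
  have h2 := (mul_eq_zero.mp h2).resolve_right (pos 2)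
  intro j
  refine Fin.cases h0 (fun j => Fin.cases (by simpa using h1) (fun j => Fin.cases h2 hc j) j) j

theorem root_red (k l m : ℕ) (hkl : l < k) (hm : 1 ≤ m) (a : Fin (l + 1) → ℕ) (r : ℤ)
    (h1 : (m : ℤ) ≤ r) (h2 : r < (k : ℤ) + m) (h : pA k l m a r = 0) :
    redP l m (fun j => (a j : ℤ)) (r - m) = 0 := by
  rw [pA, fall_zero_of (r - m) k (by omega) (by omega), zero_sub, neg_eq_zero] at h
  have hp : fall ((k : ℤ) + m - 1) (k - l) ≠ 0 := (fall_pos _ _ (by omega)).ne'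
  exact (mul_eq_zero.mp h).resolve_left (mul_ne_zero (by simp) hp)

theorem memA_special (k l m : ℕ) (hl : 1 ≤ l) (hm : 1 ≤ m) (a : Fin (l + 1) → ℕ)
    (ha : memA k l m a) :
    redP l m (fun j => (a j : ℤ)) (-(m + 1 : ℤ)) =
      fall ((l : ℤ) + m - 1) (l - 1) * (k + m) := by
  rw [redP_special l m hl hm]
  congr 1
  have : ((∑ j : Fin (l + 1), ((j : ℕ) + m) * a j : ℕ) : ℤ) = ((k + m : ℕ) : ℤ) := by
    rw [ha]
  push_cast at this
  exact this

theorem memA_le (k l m : ℕ) (hm : 1 ≤ m) (a : Fin (l + 1) → ℕ)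
    (ha : memA k l m a) (j : Fin (l + 1)) : a j ≤ k + m := by
  have := Finset.single_le_sum (f := fun j : Fin (l + 1) => ((j : ℕ) + m) * a j)
    (fun _ _ => Nat.zero_le _) (Finset.mem_univ j)
  rw [ha] at this
  refine le_trans ?_ this
  exact Nat.le_mul_of_pos_left _ (by omega)

theorem root_dvd (k l m : ℕ) (hkl : l < k) (hl : 1 ≤ l) (hm : 1 ≤ m) (a : Fin (l + 1) → ℕ)
    (ha : memA k l m a) (r : ℤ)
    (h1 : (m : ℤ) ≤ r) (h2 : r < (k : ℤ) + m) (h : pA k l m a r = 0) :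
    (r + 1).toNat ∣ (fall ((l : ℤ) + m - 1) (l - 1)).toNat * (k + m) := by
  have hq := fall_pos ((l : ℤ) + m - 1) (l - 1) (by omega)
  have h3 := redP_modEq l m (fun j => (a j : ℤ)) (r - m) (-(m + 1 : ℤ))
  rw [root_red k l m hkl hm a r h1 h2 h, memA_special k l m hl hm a ha] at h3
  have h4 := Int.modEq_iff_dvd.mp h3
  rw [← Int.natCast_dvd_natCast]
  push_cast
  rw [Int.toNat_of_nonneg (by omega), Int.toNat_of_nonneg hq.le]
  convert h4 using 1 <;> ring

theorem card_bound (n m k : ℕ) (hm : 1 ≤ m) (hk : n + 2 < k) :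
    Nat.card {a : Fin (n + 2 + 1) → ℕ // memA k (n + 2) m a ∧
          ∃ r₁ r₂ : ℤ, r₁ ≠ r₂ ∧
            (m : ℤ) ≤ r₁ ∧ r₁ < (k : ℤ) + m ∧ (m : ℤ) ≤ r₂ ∧ r₂ < (k : ℤ) + m ∧
            pA k (n + 2) m a r₁ = 0 ∧ pA k (n + 2) m a r₂ = 0} ≤
      ((fall (((n + 2 : ℕ) : ℤ) + m - 1) (n + 2 - 1)).toNat * (k + m)).divisors.card ^ 2 *
        (k + m + 1) ^ n := by
  set q := (fall (((n + 2 : ℕ) : ℤ) + m - 1) (n + 2 - 1)).toNat with hq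
  have hq0 : 0 < q := by
    have := fall_pos (((n + 2 : ℕ) : ℤ) + m - 1) (n + 2 - 1) (by omega)
    omega
  have hN : q * (k + m) ≠ 0 := by positivity
  set S := {a : Fin (n + 2 + 1) → ℕ // memA k (n + 2) m a ∧
          ∃ r₁ r₂ : ℤ, r₁ ≠ r₂ ∧
            (m : ℤ) ≤ r₁ ∧ r₁ < (k : ℤ) + m ∧ (m : ℤ) ≤ r₂ ∧ r₂ < (k : ℤ) + m ∧
            pA k (n + 2) m a r₁ = 0 ∧ pA k (n + 2) m a r₂ = 0} with hS
  have hS2 := fun a : S => a.2.2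
  choose r₁ r₂ hr using hS2
  let D := (q * (k + m)).divisors
  let F : S → (D × D) × (Fin n → Fin (k + m + 1)) := fun a =>
    ((⟨(r₁ a + 1).toNat, Nat.mem_divisors.mpr ⟨root_dvd k (n + 2) m hk (by omega) hm a.1 a.2.1 _
        (hr a).2.1 (hr a).2.2.1 (hr a).2.2.2.2.2.1, hN⟩⟩,
      ⟨(r₂ a + 1).toNat, Nat.mem_divisors.mpr ⟨root_dvd k (n + 2) m hk (by omega) hm a.1 a.2.1 _
        (hr a).2.2.2.1 (hr a).2.2.2.2.1 (hr a).2.2.2.2.2.2, hN⟩⟩),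
      fun i => ⟨a.1 i.succ.succ.succ, Nat.lt_succ_of_le (memA_le k _ m hm a.1 a.2.1 _)⟩)
  have hF : Function.Injective F := by
    intro a b hab
    simp only [F, Prod.mk.injEq, Subtype.mk.injEq] at hab
    obtain ⟨⟨e1, e2⟩, e3⟩ := hab
    obtain ⟨ha0, ha1, ha2, ha3, ha4, ha5, ha6⟩ := hr a
    obtain ⟨hb0, hb1, hb2, hb3, hb4, hb5, hb6⟩ := hr b
    have e1 : r₁ b = r₁ a := by omega
    have e2 : r₂ b = r₂ a := by omega
    rw [e1] at hb1 hb2 hb5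
    rw [e2] at hb3 hb4 hb6
    have key := redP_inj n m hm (fun j => (a.1 j : ℤ) - (b.1 j : ℤ))
      (fun i => by
        have := congrFun e3 i
        simp only [Fin.mk.injEq] at this
        simp [this]) (r₁ a - m) (r₂ a - m) (-(m + 1 : ℤ)) (by omega) (by omega) (by omega)
      (by rw [redP_sub (n + 2) m (fun j => (a.1 j : ℤ)) (fun j => (b.1 j : ℤ)),
            root_red k (n + 2) m hk hm a.1 _ ha1 ha2 ha5,
            root_red k (n + 2) m hk hm b.1 _ hb1 hb2 hb5, sub_zero])
      (by rw [redP_sub (n + 2) m (fun j => (a.1 j : ℤ)) (fun j => (b.1 j : ℤ)),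
            root_red k (n + 2) m hk hm a.1 _ ha3 ha4 ha6,
            root_red k (n + 2) m hk hm b.1 _ hb3 hb4 hb6, sub_zero])
      (by rw [redP_sub (n + 2) m (fun j => (a.1 j : ℤ)) (fun j => (b.1 j : ℤ)),
            memA_special k (n + 2) m (by omega) hm a.1 a.2.1,
            memA_special k (n + 2) m (by omega) hm b.1 b.2.1, sub_self])
    apply Subtype.ext
    funext j
    have := key j
    omega
  have := Nat.card_le_card_of_injective F hF
  refine this.trans (le_of_eq ?_)
  have hD : Nat.card D = (q * (k + m)).divisors.card := by
    rw [Nat.card_eq_fintype_card, Fintype.card_coe]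
  rw [Nat.card_prod, Nat.card_prod, hD, sq, Nat.card_fun]
  simp

/-- For fixed `l ≥ 2`, `m ≥ 1` and `ε > 0`, the number of `a ∈ A_{k,l,m}`
whose polynomial `p_a` has more than one integer root in `[m, k+m)` is
`O_{l,m,ε}(k^{l-2+ε})`. -/
theorem count_two_small_roots
    (l m : ℕ) (hl : 2 ≤ l) (hm : 1 ≤ m) (ε : ℝ) (hε : 0 < ε) :
    ∃ C : ℝ, 0 < C ∧ ∀ k : ℕ, l < k →
      (Nat.card {a : Fin (l + 1) → ℕ // memA k l m a ∧
          ∃ r₁ r₂ : ℤ, r₁ ≠ r₂ ∧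
            (m : ℤ) ≤ r₁ ∧ r₁ < (k : ℤ) + m ∧ (m : ℤ) ≤ r₂ ∧ r₂ < (k : ℤ) + m ∧
            pA k l m a r₁ = 0 ∧ pA k l m a r₂ = 0} : ℝ) ≤
        C * (k : ℝ) ^ ((l : ℝ) - 2 + ε) := by
  obtain ⟨n, rfl⟩ : ∃ n, l = n + 2 := ⟨l - 2, by omega⟩
  obtain ⟨C, hC, hdiv⟩ := divisor_bound (ε / 2) (by positivity)
  set q := (fall (((n + 2 : ℕ) : ℤ) + m - 1) (n + 2 - 1)).toNat with hq
  have hq0 : 0 < q := by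
    have := fall_pos (((n + 2 : ℕ) : ℤ) + m - 1) (n + 2 - 1) (by omega)
    omega
  have hqR : (0 : ℝ) < q := by exact_mod_cast hq0
  refine ⟨(C * (q * (m + 1) : ℝ) ^ (ε / 2)) ^ 2 * (m + 2 : ℝ) ^ n, by positivity, ?_⟩
  intro k hk
  have hk1 : (1 : ℝ) ≤ k := by exact_mod_cast (by omega : 1 ≤ k)
  have hm0 : (0 : ℝ) ≤ m := by positivity
  have h1 := card_bound n m k hm hk
  rw [← hq] at h1
  have h2 := hdiv (q * (k + m)) (by positivity)
  have h3 : ((q * (k + m) : ℕ) : ℝ) ^ (ε / 2) ≤ (q * (m + 1) : ℝ) ^ (ε / 2) * (k : ℝ) ^ (ε / 2) := by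
    rw [← Real.mul_rpow (by positivity) (by positivity)]
    refine Real.rpow_le_rpow (by positivity) ?_ (by positivity)
    push_cast
    rw [mul_assoc]
    gcongr
    nlinarith
  have h4 : ((k : ℝ) + m + 1) ≤ (m + 2) * k := by nlinarith
  have h5 : (k : ℝ) ^ (((n + 2 : ℕ) : ℝ) - 2 + ε) = ((k : ℝ) ^ (ε / 2)) ^ 2 * (k : ℝ) ^ n := by
    rw [← Real.rpow_natCast, ← Real.rpow_natCast, ← Real.rpow_mul (by positivity),
      ← Real.rpow_add (by linarith)]
    congr 1
    push_cast
    ring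
  rw [h5]
  calc _ ≤ (((q * (k + m)).divisors.card ^ 2 * (k + m + 1) ^ n : ℕ) : ℝ) := by exact_mod_cast h1
    _ = ((q * (k + m)).divisors.card : ℝ) ^ 2 * ((k : ℝ) + m + 1) ^ n := by push_cast; rfl
    _ ≤ (C * ((q * (m + 1) : ℝ) ^ (ε / 2) * (k : ℝ) ^ (ε / 2))) ^ 2 * ((m + 2) * k) ^ n := by
        gcongr
        exact h2.trans (by gcongr)
    _ = _ := by rw [mul_pow ((m : ℝ) + 2)]; ring
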